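/- Let C be the smallest set of signed permutations (of all lengths) that contains the two one-letter signed permutations 1 and −1 and is closed under direct sum ⊕ and under skew sum ⊖ (whenever the skew sum is defined). Then for every n ≥ 1, a signed permutation w ∈ B_n is separable if and only if w ∈ C. -/

import Mathlib

/-!
The absolute-value word of `w` is the word `|w_1| ⋯ |w_n|`. For a signed permutation, separability
says that entries forming an inversion of the absolute-value word have equal signs, and that this
word avoids `3142` and `2413` (`isSepB_iff_good`). The six signed patterns suffice because the
inversions of `3142`, and those of `2413`, connect all four letters, so that under the first
condition an occurrence of either has constant sign.

In this form the property is clearly preserved by direct and skew sums, as no occurrence of `3142`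
or `2413` can straddle the two summands (`Good.append_lt`, `Good.append_gt`, `InC.isSignedPerm_good`).

Conversely, a word of length at least two with distinct absolute values that avoids both patterns
splits into two nonempty factors, one entirely below the other (`exists_split`). This is proved by
adding a first letter `x` to a word `u ++ v` that is already split, say with `u` below `v`. If a
letter of `v` above `x` precedes a letter of `v` below `x`, then these two, `x` and any letter of `u`
form a `3142`. Otherwise the letters of `v` below `x` come first, and either cutting after them or
cutting after `x` works. The other case is obtained by reversing the order. The split exhibits the
signed permutation as a direct or skew sum of shorter ones, and one inducts on the length.
-/


namespace SepPaperFormal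

noncomputable section

open Polynomial

def st (a : List ℤ) : List ℤ :=
  a.map (fun x => ((a.filter (fun y => decide (y < x))).length : ℤ) + 1)

def sts (a : List ℤ) : List ℤ :=
  a.map (fun x => x.sign * (((a.filter (fun y => decide (|y| < |x|))).length : ℤ) + 1))

def IsSignedPerm (w : List ℤ) : Prop :=
  (w.map Int.natAbs).Perm (List.range' 1 w.length)

def ContainsB (w u : List ℤ) : Prop := ∃ s : List ℤ, s.Sublist w ∧ sts s = u

def ContainsA (w u : List ℤ) : Prop := ∃ s : List ℤ, s.Sublist w ∧ st s = u

def IsSepB (w : List ℤ) : Prop :=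
  IsSignedPerm w ∧
    ¬ ContainsB w [-2, 1] ∧ ¬ ContainsB w [2, -1] ∧
    ¬ ContainsB w [3, 1, 4, 2] ∧ ¬ ContainsB w [2, 4, 1, 3] ∧
    ¬ ContainsB w [-3, -1, -4, -2] ∧ ¬ ContainsB w [-2, -4, -1, -3]

def IsSepA (w : List ℤ) : Prop :=
  IsSignedPerm w ∧ (∀ x ∈ w, 0 < x) ∧
    ¬ ContainsA w [3, 1, 4, 2] ∧ ¬ ContainsA w [2, 4, 1, 3]

def oplus (u v : List ℤ) : List ℤ :=
  u ++ v.map (fun x => x + x.sign * (u.length : ℤ))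

def ominus (u v : List ℤ) : List ℤ :=
  u.map (fun x => x + x.sign * (v.length : ℤ)) ++ v

def AllSameSign (l : List ℤ) : Prop := (∀ x ∈ l, 0 < x) ∨ (∀ x ∈ l, x < 0)

def OppSign (a b : List ℤ) : Prop := ∀ x ∈ a, ∀ y ∈ b, x * y < 0

-- blocks for statement 3
def blockOf (w : List ℤ) (q : List ℕ) (i : ℕ) : List ℤ :=
  (w.drop q[i]!).take (q[i+1]! - q[i]!)

def cutSeq (w : List ℤ) (cuts : List ℕ) : List ℕ := 0 :: (cuts ++ [w.length])

def GoodDecomp (w : List ℤ) (cuts : List ℕ) : Prop :=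
  List.Chain' (· < ·) (cutSeq w cuts) ∧
  w = List.foldl oplus (blockOf w (cutSeq w cuts) 0)
        ((List.range cuts.length).map (fun i => sts (blockOf w (cutSeq w cuts) (i + 1)))) ∧
  IsSepB (blockOf w (cutSeq w cuts) 0) ∧
  (∀ i, 1 ≤ i → i ≤ cuts.length → IsSepB (sts (blockOf w (cutSeq w cuts) i))) ∧
  (∀ j, j ≤ cuts.length → AllSameSign (blockOf w (cutSeq w cuts) j)) ∧
  (∀ i, 1 ≤ i → i ≤ cuts.length →
    OppSign (blockOf w (cutSeq w cuts) (i - 1)) (blockOf w (cutSeq w cuts) i))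

-- statement 4
inductive InC : List ℤ → Prop
  | one : InC [1]
  | negone : InC [-1]
  | dsum (u v : List ℤ) : InC u → InC v → InC (oplus u v)
  | ssum (u v : List ℤ) : InC u → InC v → AllSameSign (u ++ v) → InC (ominus u v)

-- the map φₙ as a relation
inductive PhiRel : List ℤ → List ℤ → Prop
  | base : PhiRel [1] []
  | gasc (w u : List ℤ) (p : ℕ) (hp1 : 1 ≤ p) (hp2 : p < w.length)
      (h : ∀ i j, i < p → p ≤ j → j < w.length → w[i]! < w[j]!)
      (ih : PhiRel (w.take p) u) :
      PhiRel w (oplus u (st (w.drop p)))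
  | gdes (w u : List ℤ) (p : ℕ) (hp1 : 1 ≤ p) (hp2 : p < w.length)
      (h : ∀ i j, i < p → p ≤ j → j < w.length → w[j]! < w[i]!)
      (ih : PhiRel (st (w.take p)) u) :
      PhiRel w (oplus u ((w.drop p).map (fun x => x - ((w.length - p : ℕ) : ℤ) - 1)))

-- the map ψₙ as a relation
inductive PsiRel : List ℤ → List ℤ → Prop
  | base : PsiRel [] [1]
  | pos (w u : List ℤ) (p : ℕ) (hp : p < w.length)
      (hdec : w = oplus (w.take p) (sts (w.drop p)))
      (hsign : AllSameSign (w.drop p))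
      (hlast : 0 < w[w.length - 1]!)
      (ih : PsiRel (w.take p) u) :
      PsiRel w (oplus u (sts (w.drop p)))
  | neg (w u : List ℤ) (p : ℕ) (hp : p < w.length)
      (hdec : w = oplus (w.take p) (sts (w.drop p)))
      (hsign : AllSameSign (w.drop p))
      (hlast : w[w.length - 1]! < 0)
      (ih : PsiRel (w.take p) u) :
      PsiRel w (ominus u ((sts (w.drop p)).map (fun x => x + ((w.length - p : ℕ) : ℤ) + 1)))

-- descent statistics
def DesB (w : List ℤ) : Finset ℕ :=
  (Finset.range w.length).filter (fun i => (if i = 0 then (0 : ℤ) else w[i-1]!) > w[i]!)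

def DDesB (w : List ℤ) : Finset ℕ :=
  (Finset.range w.length).filter (fun i =>
    (i = 0 ∨ (if i - 1 = 0 then (0 : ℤ) else w[i-2]!) > (if i = 0 then (0 : ℤ) else w[i-1]!)) ∧
    (if i = 0 then (0 : ℤ) else w[i-1]!) > w[i]!)

def DesA (w : List ℤ) : Finset ℕ :=
  (Finset.range w.length).filter (fun i => 1 ≤ i ∧ w[i-1]! > w[i]!)

def DDesA (w : List ℤ) : Finset ℕ :=
  (Finset.range w.length).filter (fun i => 1 ≤ i ∧
    (i = 1 ∨ w[i-2]! > w[i-1]!) ∧ w[i-1]! > w[i]!)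

-- inversions, negatives, negative sum pairs (0-based index sets)
def InvF (w : List ℤ) : Finset (ℕ × ℕ) :=
  (Finset.range w.length ×ˢ Finset.range w.length).filter
    (fun p => p.1 < p.2 ∧ w[p.2]! < w[p.1]!)

def NegF (w : List ℤ) : Finset ℕ :=
  (Finset.range w.length).filter (fun i => w[i]! < 0)

def NspF (w : List ℤ) : Finset (ℕ × ℕ) :=
  (Finset.range w.length ×ˢ Finset.range w.length).filter
    (fun p => p.1 < p.2 ∧ w[p.1]! + w[p.2]! < 0)

/-- Left weak order on `S_n` (combinatorial characterization). -/
def leS (u v : List ℤ) : Prop := InvF u ⊆ InvF v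

/-- Left weak order on `B_n` (combinatorial characterization). -/
def leB (u v : List ℤ) : Prop := InvF u ⊆ InvF v ∧ NegF u ⊆ NegF v ∧ NspF u ⊆ NspF v

/-- Coxeter length in type `B`. -/
def lenB (w : List ℤ) : ℕ := (NegF w).card + (InvF w).card + (NspF w).card

/-- Coxeter length in type `A`. -/
def lenS (w : List ℤ) : ℕ := (InvF w).card

def IsPermW (w : List ℤ) : Prop := IsSignedPerm w ∧ ∀ x ∈ w, 0 < x

/-- Rank generating function of the principal lower ideal `Λ_w^B`. -/
def FLamB (w : List ℤ) : Polynomial ℚ :=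
  ∑ᶠ u ∈ {u : List ℤ | u.length = w.length ∧ IsSignedPerm u ∧ leB u w},
    (X : Polynomial ℚ) ^ lenB u

/-- Rank generating function of the principal upper ideal `V_w^B`. -/
def FVB (w : List ℤ) : Polynomial ℚ :=
  ∑ᶠ u ∈ {u : List ℤ | u.length = w.length ∧ IsSignedPerm u ∧ leB w u},
    (X : Polynomial ℚ) ^ lenB u

/-- Rank generating function of the principal lower ideal `Λ_w^S`. -/
def FLamS (w : List ℤ) : Polynomial ℚ :=
  ∑ᶠ u ∈ {u : List ℤ | u.length = w.length ∧ IsPermW u ∧ leS u w},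
    (X : Polynomial ℚ) ^ lenS u

/-- Rank generating function of the principal upper ideal `V_w^S`. -/
def FVS (w : List ℤ) : Polynomial ℚ :=
  ∑ᶠ u ∈ {u : List ℤ | u.length = w.length ∧ IsPermW u ∧ leS w u},
    (X : Polynomial ℚ) ^ lenS u

/-- `[i] = 1 + q + ⋯ + q^{i-1}`. -/
def qint (i : ℕ) : Polynomial ℚ := ∑ j ∈ Finset.range i, (X : Polynomial ℚ) ^ j

/-- `[m]! = [1][2]⋯[m]`. -/
def qfact (m : ℕ) : Polynomial ℚ := ∏ i ∈ Finset.range m, qint (i + 1)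

-- separating trees
inductive STree where
  | leaf : STree
  | node : Bool → STree → STree → STree

def numLeaves : STree → ℕ
  | .leaf => 1
  | .node _ l r => numLeaves l + numLeaves r

def Decomp (w : List ℤ) (p : ℕ) : Prop :=
  (w = oplus (w.take p) (sts (w.drop p)) ∧ IsSepB (w.take p) ∧ IsSepB (sts (w.drop p)) ∧
    AllSameSign (w.drop p)) ∨
  (w = ominus (sts (w.take p)) (w.drop p) ∧ IsSepB (sts (w.take p)) ∧ IsSepB (w.drop p) ∧
    AllSameSign (w.drop p))

/-- `IsSepTree w T`: `T` is the (shape of the) separating tree of the separable signed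
permutation `w`, where internal nodes labeled `true` are `⊕`-nodes and those labeled
`false` are `⊖`-nodes, and the separating index is chosen largest possible. -/
inductive IsSepTree : List ℤ → STree → Prop
  | leaf (x : ℤ) : IsSepTree [x] .leaf
  | nodeA (w : List ℤ) (p : ℕ) (l r : STree)
      (hp1 : 1 ≤ p) (hp2 : p < w.length)
      (hmax : ∀ q, p < q → q < w.length → ¬ Decomp w q)
      (hdec : w = oplus (w.take p) (sts (w.drop p)))
      (h1 : IsSepB (w.take p)) (h2 : IsSepB (sts (w.drop p)))
      (hsgn : AllSameSign (w.drop p))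
      (hl : IsSepTree (w.take p) l) (hr : IsSepTree (sts (w.drop p)) r) :
      IsSepTree w (.node (decide (w[p-1]! < w[p]!)) l r)
  | nodeB (w : List ℤ) (p : ℕ) (l r : STree)
      (hp1 : 1 ≤ p) (hp2 : p < w.length)
      (hmax : ∀ q, p < q → q < w.length → ¬ Decomp w q)
      (hdec : w = ominus (sts (w.take p)) (w.drop p))
      (h1 : IsSepB (sts (w.take p))) (h2 : IsSepB (w.drop p))
      (hsgn : AllSameSign (w.drop p))
      (hl : IsSepTree (sts (w.take p)) l) (hr : IsSepTree (w.drop p) r) :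
      IsSepTree w (.node (decide (w[p-1]! < w[p]!)) l r)

/-- Multiset of leaf-counts `N(V)` over internal `⊕`-nodes `V` whose parent is a
`⊖`-node (the root, whose parent label is `none`, is excluded): the set `S⁺(w)`. -/
def plusNodes : STree → Option Bool → Multiset ℕ
  | .leaf, _ => 0
  | .node b l r, parent =>
      (if b = true ∧ parent = some false then ({numLeaves (.node b l r)} : Multiset ℕ) else 0)
        + plusNodes l (some b) + plusNodes r (some b)

/-- Multiset of leaf-counts `N(V)` over internal `⊖`-nodes `V` whose parent is a
`⊕`-node (root excluded): the set `S⁻(w)`. -/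
def minusNodes : STree → Option Bool → Multiset ℕ
  | .leaf, _ => 0
  | .node b l r, parent =>
      (if b = false ∧ parent = some true then ({numLeaves (.node b l r)} : Multiset ℕ) else 0)
        + minusNodes l (some b) + minusNodes r (some b)

/-- `∏_{m ∈ s} [m]!`. -/
def qfactProd (s : Multiset ℕ) : Polynomial ℚ := (s.map qfact).prod


/-- Separability expressed directly on occurrences of patterns: inversions of absolute values occur
only between entries of equal sign, and the absolute values avoid `3142` and `2413`. -/
def Good (w : List ℤ) : Prop :=
  (∀ a b, [a, b].Sublist w → |b| < |a| → a.sign = b.sign) ∧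
  (∀ a b c d, [a, b, c, d].Sublist w → ¬ (|b| < |d| ∧ |d| < |a| ∧ |a| < |c|)) ∧
  (∀ a b c d, [a, b, c, d].Sublist w → ¬ (|c| < |a| ∧ |a| < |d| ∧ |d| < |b|))

/-! ### Pattern containment and occurrences -/

/-- Standardization reflects the order of absolute values. -/
lemma abs_lt_of_count_lt (s : List ℤ) {x y : ℤ}
    (h : (s.filter (fun z => decide (|z| < |x|))).length <
      (s.filter (fun z => decide (|z| < |y|))).length) : |x| < |y| := by
  by_contra hc
  push Not at hc
  have : (s.filter (fun z => decide (|z| < |y|))).length ≤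
      (s.filter (fun z => decide (|z| < |x|))).length := by
    apply List.Sublist.length_le
    apply List.monotone_filter_right
    intro z hz
    simp only [decide_eq_true_eq] at hz ⊢
    omega
  omega

lemma pos_of_sign_mul {x m : ℤ} {c : ℕ} (hm : 0 < m) (h : x.sign * ((c : ℤ) + 1) = m) :
    x.sign = 1 ∧ (c : ℤ) + 1 = m := by
  rcases lt_trichotomy x 0 with hx | hx | hx
  · rw [Int.sign_eq_neg_one_of_neg hx] at h; omega
  · subst hx; simp at h; omega
  · rw [Int.sign_eq_one_of_pos hx] at h ⊢; omega

lemma neg_of_sign_mul {x m : ℤ} {c : ℕ} (hm : m < 0) (h : x.sign * ((c : ℤ) + 1) = m) :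
    x.sign = -1 ∧ (c : ℤ) + 1 = -m := by
  rcases lt_trichotomy x 0 with hx | hx | hx
  · rw [Int.sign_eq_neg_one_of_neg hx] at h ⊢; omega
  · subst hx; simp at h; omega
  · rw [Int.sign_eq_one_of_pos hx] at h; omega

lemma sts_length (s : List ℤ) : (sts s).length = s.length := by simp [sts]

/-- Reading off a four-letter pattern: `ca`, …, `cd` count the entries of smaller absolute value. Only
the comparisons needed to recognize `3142` and `2413` are recorded. -/
lemma sts_four {s : List ℤ} {p q r t : ℤ} (h : sts s = [p, q, r, t]) :
    ∃ a b c d, s = [a, b, c, d] ∧ ∃ ca cb cc cd : ℕ,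
      a.sign * ((ca : ℤ) + 1) = p ∧ b.sign * ((cb : ℤ) + 1) = q ∧
      c.sign * ((cc : ℤ) + 1) = r ∧ d.sign * ((cd : ℤ) + 1) = t ∧
      (cb < cd → |b| < |d|) ∧ (cd < ca → |d| < |a|) ∧ (ca < cc → |a| < |c|) ∧
      (cc < ca → |c| < |a|) ∧ (ca < cd → |a| < |d|) ∧ (cd < cb → |d| < |b|) := by
  have hl : s.length = 4 := by rw [← sts_length, h]; rfl
  match s, hl with
  | [a, b, c, d], _ =>
    unfold sts at h
    simp only [List.map_cons, List.map_nil, List.cons.injEq, and_true] at h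
    obtain ⟨h1, h2, h3, h4⟩ := h
    exact ⟨a, b, c, d, rfl, _, _, _, _, h1, h2, h3, h4, abs_lt_of_count_lt _,
      abs_lt_of_count_lt _, abs_lt_of_count_lt _, abs_lt_of_count_lt _, abs_lt_of_count_lt _,
      abs_lt_of_count_lt _⟩

lemma sts_two {s : List ℤ} {p q : ℤ} (h : sts s = [p, q]) :
    ∃ a b, s = [a, b] ∧ ∃ ca cb : ℕ,
      a.sign * ((ca : ℤ) + 1) = p ∧ b.sign * ((cb : ℤ) + 1) = q ∧ (cb < ca → |b| < |a|) := by
  have hl : s.length = 2 := by rw [← sts_length, h]; rfl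
  match s, hl with
  | [a, b], _ =>
    unfold sts at h
    simp only [List.map_cons, List.map_nil, List.cons.injEq, and_true] at h
    exact ⟨a, b, rfl, _, _, h.1, h.2, abs_lt_of_count_lt _⟩

lemma sts_pair {a b : ℤ} (h : |b| < |a|) : sts [a, b] = [a.sign * 2, b.sign] := by
  have := h.not_gt
  simp [sts, h, this]

lemma sts_3142 {a b c d : ℤ} (h1 : |b| < |d|) (h2 : |d| < |a|) (h3 : |a| < |c|) :
    sts [a, b, c, d] = [a.sign * 3, b.sign * 1, c.sign * 4, d.sign * 2] := by
  have e1 := h2.trans h3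
  have e2 := h1.trans h2
  have e3 := h1.trans e1
  simp [sts, h1, h2, h3, e1, e2, e3, h1.not_gt, h2.not_gt, h3.not_gt,
    e1.not_gt, e2.not_gt, e3.not_gt]

lemma sts_2413 {a b c d : ℤ} (h1 : |c| < |a|) (h2 : |a| < |d|) (h3 : |d| < |b|) :
    sts [a, b, c, d] = [a.sign * 2, b.sign * 4, c.sign * 1, d.sign * 3] := by
  have e1 := h2.trans h3
  have e2 := h1.trans h2
  have e3 := h1.trans e1
  simp [sts, h1, h2, h3, e1, e2, e3, h1.not_gt, h2.not_gt, h3.not_gt,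
    e1.not_gt, e2.not_gt, e3.not_gt]

lemma IsSignedPerm.ne_zero {w : List ℤ} (h : IsSignedPerm w) {x : ℤ} (hx : x ∈ w) : x ≠ 0 := by
  have := h.mem_iff.1 (List.mem_map_of_mem hx)
  rw [List.mem_range'_1] at this
  omega

lemma sign_eq_or {x : ℤ} (hx : x ≠ 0) : x.sign = 1 ∨ x.sign = -1 := by
  rcases lt_or_gt_of_ne hx with h | h
  · exact .inr (Int.sign_eq_neg_one_of_neg h)
  · exact .inl (Int.sign_eq_one_of_pos h)

theorem isSepB_iff_good {w : List ℤ} (hw : IsSignedPerm w) : IsSepB w ↔ Good w := by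
  constructor
  · rintro ⟨-, h1, h2, h3, h4, h5, h6⟩
    have key : ∀ a b, [a, b].Sublist w → |b| < |a| → a.sign = b.sign := by
      intro a b hs hlt
      rcases sign_eq_or (hw.ne_zero (hs.subset (by simp : a ∈ [a, b]))) with ha | ha <;>
      rcases sign_eq_or (hw.ne_zero (hs.subset (by simp : b ∈ [a, b]))) with hb | hb
      · rw [ha, hb]
      · exact absurd ⟨_, hs, by rw [sts_pair hlt, ha, hb]; rfl⟩ h2
      · exact absurd ⟨_, hs, by rw [sts_pair hlt, ha, hb]; rfl⟩ h1
      · rw [ha, hb]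
    refine ⟨key, ?_, ?_⟩
    · rintro a b c d hs ⟨e1, e2, e3⟩
      have s1 := key a b (.trans (by simp) hs) (by omega)
      have s2 := key a d (.trans (by simp) hs) (by omega)
      have s3 := key c d (.trans (by simp) hs) (by omega)
      rcases sign_eq_or (hw.ne_zero (hs.subset (by simp : a ∈ [a, b, c, d]))) with ha | ha
      · exact h3 ⟨_, hs, by rw [sts_3142 e1 e2 e3, s3, ← s2, ← s1, ha]; rfl⟩
      · exact h5 ⟨_, hs, by rw [sts_3142 e1 e2 e3, s3, ← s2, ← s1, ha]; rfl⟩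
    · rintro a b c d hs ⟨e1, e2, e3⟩
      have s1 := key a c (.trans (by simp) hs) (by omega)
      have s2 := key b c (.trans (by simp) hs) (by omega)
      have s3 := key b d (.trans (by simp) hs) (by omega)
      rcases sign_eq_or (hw.ne_zero (hs.subset (by simp : a ∈ [a, b, c, d]))) with ha | ha
      · exact h4 ⟨_, hs, by rw [sts_2413 e1 e2 e3, ← s3, s2, ← s1, ha]; rfl⟩
      · exact h6 ⟨_, hs, by rw [sts_2413 e1 e2 e3, ← s3, s2, ← s1, ha]; rfl⟩
  · rintro ⟨g1, g2, g3⟩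
    refine ⟨hw, ?_, ?_, ?_, ?_, ?_, ?_⟩ <;> rintro ⟨s, hs, he⟩
    · obtain ⟨a, b, rfl, ca, cb, h1, h2, h3⟩ := sts_two he
      have := neg_of_sign_mul (by norm_num) h1
      have := pos_of_sign_mul (by norm_num) h2
      have := g1 a b hs (h3 (by omega))
      omega
    · obtain ⟨a, b, rfl, ca, cb, h1, h2, h3⟩ := sts_two he
      have := pos_of_sign_mul (by norm_num) h1
      have := neg_of_sign_mul (by norm_num) h2
      have := g1 a b hs (h3 (by omega))
      omega
    · obtain ⟨a, b, c, d, rfl, ca, cb, cc, cd, h1, h2, h3, h4, k1, k2, k3, -⟩ := sts_four he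
      have := pos_of_sign_mul (by norm_num) h1
      have := pos_of_sign_mul (by norm_num) h2
      have := pos_of_sign_mul (by norm_num) h3
      have := pos_of_sign_mul (by norm_num) h4
      exact g2 a b c d hs ⟨k1 (by omega), k2 (by omega), k3 (by omega)⟩
    · obtain ⟨a, b, c, d, rfl, ca, cb, cc, cd, h1, h2, h3, h4, -, -, -, k1, k2, k3⟩ := sts_four he
      have := pos_of_sign_mul (by norm_num) h1
      have := pos_of_sign_mul (by norm_num) h2
      have := pos_of_sign_mul (by norm_num) h3
      have := pos_of_sign_mul (by norm_num) h4
      exact g3 a b c d hs ⟨k1 (by omega), k2 (by omega), k3 (by omega)⟩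
    · obtain ⟨a, b, c, d, rfl, ca, cb, cc, cd, h1, h2, h3, h4, k1, k2, k3, -⟩ := sts_four he
      have := neg_of_sign_mul (by norm_num) h1
      have := neg_of_sign_mul (by norm_num) h2
      have := neg_of_sign_mul (by norm_num) h3
      have := neg_of_sign_mul (by norm_num) h4
      exact g2 a b c d hs ⟨k1 (by omega), k2 (by omega), k3 (by omega)⟩
    · obtain ⟨a, b, c, d, rfl, ca, cb, cc, cd, h1, h2, h3, h4, -, -, -, k1, k2, k3⟩ := sts_four he
      have := neg_of_sign_mul (by norm_num) h1
      have := neg_of_sign_mul (by norm_num) h2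
      have := neg_of_sign_mul (by norm_num) h3
      have := neg_of_sign_mul (by norm_num) h4
      exact g3 a b c d hs ⟨k1 (by omega), k2 (by omega), k3 (by omega)⟩

/-! ### Stability of separability -/

lemma Good.sublist {u w : List ℤ} (h : Good w) (hs : u.Sublist w) : Good u :=
  ⟨fun a b h' => h.1 a b (h'.trans hs), fun a b c d h' => h.2.1 a b c d (h'.trans hs),
    fun a b c d h' => h.2.2 a b c d (h'.trans hs)⟩

/-- A relabeling that keeps signs and the relative order of absolute values preserves `Good`. -/
lemma Good.map {v : List ℤ} (h : Good v) (f : ℤ → ℤ) (hsign : ∀ x ∈ v, (f x).sign = x.sign)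
    (habs : ∀ x ∈ v, ∀ y ∈ v, |f x| < |f y| → |x| < |y|) : Good (v.map f) := by
  refine ⟨?_, ?_, ?_⟩
  · intro a b hs hlt
    obtain ⟨l, hl, he⟩ := List.sublist_map_iff.1 hs
    have hlen : l.length = 2 := by simpa using (congrArg List.length he).symm
    match l, hlen with
    | [a', b'], _ =>
      simp only [List.map_cons, List.map_nil, List.cons.injEq, and_true] at he
      obtain ⟨rfl, rfl⟩ := he
      have ha := hl.subset (by simp : a' ∈ [a', b'])
      have hb := hl.subset (by simp : b' ∈ [a', b'])
      rw [hsign _ ha, hsign _ hb]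
      exact h.1 _ _ hl (habs _ hb _ ha hlt)
  all_goals
    rintro a b c d hs ⟨e1, e2, e3⟩
    obtain ⟨l, hl, he⟩ := List.sublist_map_iff.1 hs
    have hlen : l.length = 4 := by simpa using (congrArg List.length he).symm
    match l, hlen with
    | [a', b', c', d'], _ =>
      simp only [List.map_cons, List.map_nil, List.cons.injEq, and_true] at he
      obtain ⟨rfl, rfl, rfl, rfl⟩ := he
      have ha := hl.subset (by simp : a' ∈ [a', b', c', d'])
      have hb := hl.subset (by simp : b' ∈ [a', b', c', d'])
      have hc := hl.subset (by simp : c' ∈ [a', b', c', d'])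
      have hd := hl.subset (by simp : d' ∈ [a', b', c', d'])
      first
      | exact h.2.1 _ _ _ _ hl ⟨habs _ hb _ hd e1, habs _ hd _ ha e2, habs _ ha _ hc e3⟩
      | exact h.2.2 _ _ _ _ hl ⟨habs _ hc _ ha e1, habs _ ha _ hd e2, habs _ hd _ hb e3⟩

lemma pair_sublist_append {a b : ℤ} {u v : List ℤ} (h : [a, b].Sublist (u ++ v)) :
    [a, b].Sublist u ∨ (a ∈ u ∧ b ∈ v) ∨ [a, b].Sublist v := by
  obtain ⟨l, r, he, hl, hr⟩ := List.sublist_append_iff.1 h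
  match l with
  | [] => simp at he; subst he; exact .inr (.inr hr)
  | [x] =>
    simp at he; obtain ⟨rfl, rfl⟩ := he
    exact .inr (.inl ⟨by simpa using hl, by simpa using hr⟩)
  | [x, y] => simp at he; obtain ⟨rfl, rfl, rfl⟩ := he; exact .inl hl
  | _ :: _ :: _ :: _ => simp at he

lemma quad_sublist_append {a b c d : ℤ} {u v : List ℤ} (h : [a, b, c, d].Sublist (u ++ v)) :
    [a, b, c, d].Sublist u ∨ [a, b, c, d].Sublist v ∨ (a ∈ u ∧ b ∈ v ∧ c ∈ v ∧ d ∈ v) ∨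
      (a ∈ u ∧ b ∈ u ∧ c ∈ v ∧ d ∈ v) ∨ (a ∈ u ∧ b ∈ u ∧ c ∈ u ∧ d ∈ v) := by
  obtain ⟨l, r, he, hl, hr⟩ := List.sublist_append_iff.1 h
  have hl' := hl.subset
  have hr' := hr.subset
  match l with
  | [] => simp at he; subst he; exact .inr (.inl hr)
  | [x] => simp at he; obtain ⟨rfl, rfl⟩ := he; simp at hl' hr'; tauto
  | [x, y] => simp at he; obtain ⟨rfl, rfl, rfl⟩ := he; simp at hl' hr'; tauto
  | [x, y, z] => simp at he; obtain ⟨rfl, rfl, rfl, rfl⟩ := he; simp at hl' hr'; tauto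
  | [x, y, z, t] => simp at he; obtain ⟨rfl, rfl, rfl, rfl, rfl⟩ := he; exact .inl hl
  | _ :: _ :: _ :: _ :: _ :: _ => simp at he

lemma Good.append_lt {u v : List ℤ} (hu : Good u) (hv : Good v)
    (h : ∀ a ∈ u, ∀ b ∈ v, |a| < |b|) : Good (u ++ v) := by
  refine ⟨?_, ?_, ?_⟩
  · intro a b hs hlt
    rcases pair_sublist_append hs with h' | ⟨ha, hb⟩ | h'
    · exact hu.1 _ _ h' hlt
    · have := h a ha b hb
      omega
    · exact hv.1 _ _ h' hlt
  · rintro a b c d hs ⟨e1, e2, e3⟩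
    rcases quad_sublist_append hs with h' | h' | ⟨ha, hb, hc, hd⟩ | ⟨ha, hb, hc, hd⟩ |
      ⟨ha, hb, hc, hd⟩
    · exact hu.2.1 _ _ _ _ h' ⟨e1, e2, e3⟩
    · exact hv.2.1 _ _ _ _ h' ⟨e1, e2, e3⟩
    all_goals have := h a ha d hd; omega
  · rintro a b c d hs ⟨e1, e2, e3⟩
    rcases quad_sublist_append hs with h' | h' | ⟨ha, hb, hc, hd⟩ | ⟨ha, hb, hc, hd⟩ |
      ⟨ha, hb, hc, hd⟩
    · exact hu.2.2 _ _ _ _ h' ⟨e1, e2, e3⟩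
    · exact hv.2.2 _ _ _ _ h' ⟨e1, e2, e3⟩
    · have := h a ha c hc; omega
    · have := h a ha c hc; omega
    · have := h b hb d hd; omega

lemma Good.append_gt {u v : List ℤ} (hu : Good u) (hv : Good v)
    (h : ∀ a ∈ u, ∀ b ∈ v, |b| < |a|) (hsign : ∀ a ∈ u, ∀ b ∈ v, a.sign = b.sign) :
    Good (u ++ v) := by
  refine ⟨?_, ?_, ?_⟩
  · intro a b hs hlt
    rcases pair_sublist_append hs with h' | ⟨ha, hb⟩ | h'
    · exact hu.1 _ _ h' hlt
    · exact hsign a ha b hb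
    · exact hv.1 _ _ h' hlt
  · rintro a b c d hs ⟨e1, e2, e3⟩
    rcases quad_sublist_append hs with h' | h' | ⟨ha, hb, hc, hd⟩ | ⟨ha, hb, hc, hd⟩ |
      ⟨ha, hb, hc, hd⟩
    · exact hu.2.1 _ _ _ _ h' ⟨e1, e2, e3⟩
    · exact hv.2.1 _ _ _ _ h' ⟨e1, e2, e3⟩
    · have := h a ha c hc; omega
    · have := h a ha c hc; omega
    · have := h b hb d hd; omega
  · rintro a b c d hs ⟨e1, e2, e3⟩
    rcases quad_sublist_append hs with h' | h' | ⟨ha, hb, hc, hd⟩ | ⟨ha, hb, hc, hd⟩ |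
      ⟨ha, hb, hc, hd⟩
    · exact hu.2.2 _ _ _ _ h' ⟨e1, e2, e3⟩
    · exact hv.2.2 _ _ _ _ h' ⟨e1, e2, e3⟩
    all_goals have := h a ha d hd; omega

/-! ### Sums of separable signed permutations -/

lemma natAbs_shift {x : ℤ} (hx : x ≠ 0) (p : ℕ) :
    (x + x.sign * (p : ℤ)).natAbs = x.natAbs + p := by
  rcases lt_or_gt_of_ne hx with h | h
  · rw [Int.sign_eq_neg_one_of_neg h]; omega
  · rw [Int.sign_eq_one_of_pos h]; omega

lemma sign_shift (x : ℤ) (p : ℕ) : (x + x.sign * (p : ℤ)).sign = x.sign := by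
  rcases lt_trichotomy x 0 with h | h | h
  · rw [Int.sign_eq_neg_one_of_neg h, Int.sign_eq_neg_one_of_neg]; omega
  · simp [h]
  · rw [Int.sign_eq_one_of_pos h, Int.sign_eq_one_of_pos]; omega

lemma good_shift {v : List ℤ} (h0 : ∀ x ∈ v, x ≠ 0) (h : Good v) (p : ℕ) :
    Good (v.map (fun x => x + x.sign * (p : ℤ))) := by
  refine h.map _ (fun x _ => sign_shift x p) (fun x hx y hy hlt => ?_)
  have h1 := natAbs_shift (h0 x hx) p
  have h2 := natAbs_shift (h0 y hy) p
  rw [Int.abs_eq_natAbs, Int.abs_eq_natAbs] at hlt ⊢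
  omega

lemma map_natAbs_shift {v : List ℤ} (hv : IsSignedPerm v) (p : ℕ) :
    ((v.map (fun x => x + x.sign * (p : ℤ))).map Int.natAbs).Perm
      (List.range' (1 + p) v.length) := by
  have h1 : (v.map (fun x => x + x.sign * (p : ℤ))).map Int.natAbs
      = (v.map Int.natAbs).map (fun x => p + x) := by
    rw [List.map_map, List.map_map]
    refine List.map_congr_left fun x hx => ?_
    simp only [Function.comp]
    rw [natAbs_shift (hv.ne_zero hx), add_comm]
  have h2 : List.range' (1 + p) v.length = (List.range' 1 v.length).map (fun x => p + x) := by
    rw [List.map_add_range', add_comm]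
  rw [h1, h2]
  exact hv.map _

lemma isSignedPerm_oplus {u v : List ℤ} (hu : IsSignedPerm u) (hv : IsSignedPerm v) :
    IsSignedPerm (oplus u v) := by
  unfold oplus IsSignedPerm
  rw [List.map_append, List.length_append, List.length_map, ← List.range'_append_1]
  exact hu.append (map_natAbs_shift hv _)

lemma isSignedPerm_ominus {u v : List ℤ} (hu : IsSignedPerm u) (hv : IsSignedPerm v) :
    IsSignedPerm (ominus u v) := by
  unfold ominus IsSignedPerm
  rw [List.map_append, List.length_append, List.length_map, add_comm, ← List.range'_append_1]
  exact List.perm_append_comm.trans (List.Perm.append hv (map_natAbs_shift hu _))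

lemma IsSignedPerm.natAbs_le {w : List ℤ} (h : IsSignedPerm w) {x : ℤ} (hx : x ∈ w) :
    x.natAbs ≤ w.length := by
  have := h.mem_iff.1 (List.mem_map_of_mem hx)
  rw [List.mem_range'_1] at this
  omega

lemma abs_lt_shift {u v : List ℤ} (hu : IsSignedPerm u) (hv : IsSignedPerm v) :
    ∀ a ∈ u, ∀ b ∈ v.map (fun x => x + x.sign * (u.length : ℤ)), |a| < |b| := by
  intro a ha b hb
  obtain ⟨x, hx, rfl⟩ := List.mem_map.1 hb
  have h1 := natAbs_shift (hv.ne_zero hx) u.length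
  have h2 := hu.natAbs_le ha
  have h3 := hv.ne_zero hx
  have h4 := Int.natAbs_pos.2 h3
  rw [Int.abs_eq_natAbs, Int.abs_eq_natAbs]
  omega

lemma InC.isSignedPerm_good {w : List ℤ} (h : InC w) : IsSignedPerm w ∧ Good w := by
  have single : ∀ x : ℤ, Good [x] := by
    intro x
    refine ⟨fun a b hs => ?_, fun a b c d hs => ?_, fun a b c d hs => ?_⟩ <;>
    · have := hs.length_le
      simp at this
  induction h with
  | one => exact ⟨by simp [IsSignedPerm], single 1⟩
  | negone => exact ⟨by simp [IsSignedPerm], single (-1)⟩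
  | dsum u v _ _ ihu ihv =>
    exact ⟨isSignedPerm_oplus ihu.1 ihv.1, ihu.2.append_lt
      (good_shift (fun x hx => ihv.1.ne_zero hx) ihv.2 _) (abs_lt_shift ihu.1 ihv.1)⟩
  | ssum u v _ _ hs ihu ihv =>
    refine ⟨isSignedPerm_ominus ihu.1 ihv.1, Good.append_gt
      (good_shift (fun x hx => ihu.1.ne_zero hx) ihu.2 _) ihv.2
      (fun a ha b hb => abs_lt_shift ihv.1 ihu.1 b hb a ha) ?_⟩
    intro a ha b hb
    obtain ⟨x, hx, rfl⟩ := List.mem_map.1 ha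
    rw [sign_shift]
    rcases hs with hs | hs
    · rw [Int.sign_eq_one_of_pos (hs x (by simp [hx])), Int.sign_eq_one_of_pos (hs b (by simp [hb]))]
    · rw [Int.sign_eq_neg_one_of_neg (hs x (by simp [hx])),
        Int.sign_eq_neg_one_of_neg (hs b (by simp [hb]))]

/-! ### Splitting a separable word -/

lemma split_or_inversion (f : ℤ → ℤ) (x : ℤ) (v : List ℤ) (hx : ∀ y ∈ v, f y ≠ f x) :
    (∃ v₁ v₂, v = v₁ ++ v₂ ∧ (∀ y ∈ v₁, f y < f x) ∧ (∀ y ∈ v₂, f x < f y)) ∨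
      ∃ b a, [b, a].Sublist v ∧ f a < f x ∧ f x < f b := by
  induction v with
  | nil => exact .inl ⟨[], [], by simp⟩
  | cons y v ih =>
    rcases ih (fun z hz => hx z (by simp [hz])) with ⟨v₁, v₂, rfl, h1, h2⟩ | ⟨b, a, hs, h1, h2⟩
    · rcases lt_or_gt_of_ne (hx y (by simp)) with hy | hy
      · exact .inl ⟨y :: v₁, v₂, by simp, by simpa using ⟨hy, h1⟩, h2⟩
      · match v₁ with
        | [] => exact .inl ⟨[], y :: v₂, by simp, by simp, by simpa using ⟨hy, h2⟩⟩
        | z :: v₁ => exact .inr ⟨y, z, by simp, h1 z (by simp), hy⟩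
    · exact .inr ⟨b, a, hs.trans (List.sublist_cons_self _ _), h1, h2⟩

/-- Adding a first letter to a word split in increasing order. Taking `f` to be the absolute value
or its negative covers the two possible orders, with pattern `3142` or `2413` respectively. -/
lemma split_cons (f : ℤ → ℤ) (x : ℤ) (u v : List ℤ) (hu : u ≠ []) (hv : v ≠ [])
    (hlt : ∀ a ∈ u, ∀ b ∈ v, f a < f b) (hx : ∀ y ∈ v, f y ≠ f x)
    (hav : ∀ a b c d, [a, b, c, d].Sublist (x :: (u ++ v)) →
      ¬ (f b < f d ∧ f d < f a ∧ f a < f c)) :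
    ∃ u' v', u' ≠ [] ∧ v' ≠ [] ∧ x :: (u ++ v) = u' ++ v' ∧
      ((∀ a ∈ u', ∀ b ∈ v', f a < f b) ∨ (∀ a ∈ u', ∀ b ∈ v', f b < f a)) := by
  obtain ⟨z, hz⟩ := List.exists_mem_of_ne_nil u hu
  rcases split_or_inversion f x v hx with ⟨v₁, v₂, rfl, h1, h2⟩ | ⟨b, a, hs, h1, h2⟩
  · by_cases hv2 : v₂ = []
    · subst hv2
      refine ⟨[x], u ++ v₁, by simp, by simp [hu], by simp, .inr ?_⟩
      obtain ⟨t, ht⟩ := List.exists_mem_of_ne_nil v₁ (by simpa using hv)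
      intro a ha b hb
      rw [List.mem_singleton] at ha
      subst ha
      rcases List.mem_append.1 hb with hb | hb
      · exact (hlt b hb t (by simp [ht])).trans (h1 t ht)
      · exact h1 b hb
    · refine ⟨x :: (u ++ v₁), v₂, by simp, hv2, by simp, .inl ?_⟩
      intro a ha b hb
      rcases List.mem_cons.1 ha with rfl | ha
      · exact h2 b hb
      rcases List.mem_append.1 ha with ha | ha
      · exact hlt a ha b (by simp [hb])
      · exact (h1 a ha).trans (h2 b hb)
  · refine absurd ⟨hlt z hz a (hs.subset (by simp)), h1, h2⟩ (hav x z b a ?_)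
    exact .cons_cons x (List.Sublist.append (List.singleton_sublist.2 hz) hs)

theorem exists_split (w : List ℤ) (hlen : 2 ≤ w.length)
    (hnd : (w.map (fun x : ℤ => |x|)).Nodup) (hg : Good w) :
    ∃ u v, u ≠ [] ∧ v ≠ [] ∧ w = u ++ v ∧
      ((∀ a ∈ u, ∀ b ∈ v, |a| < |b|) ∨ (∀ a ∈ u, ∀ b ∈ v, |b| < |a|)) := by
  induction w with
  | nil => simp at hlen
  | cons x w ih =>
    rw [List.map_cons, List.nodup_cons] at hnd
    have hx : ∀ y ∈ w, |y| ≠ |x| := fun y hy he => hnd.1 (List.mem_map.2 ⟨y, hy, he⟩)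
    match w, hlen with
    | [y], _ =>
      refine ⟨[x], [y], by simp, by simp, rfl, ?_⟩
      simpa using (lt_or_gt_of_ne (hx y (by simp))).symm
    | y :: y' :: w', _ =>
      obtain ⟨u, v, hu, hv, he, hd⟩ := ih (by simp) hnd.2 (hg.sublist (List.sublist_cons_self _ _))
      rw [he] at hg hx ⊢
      rcases hd with hd | hd
      · exact split_cons (fun z => |z|) x u v hu hv hd (fun y hy => hx y (by simp [hy])) hg.2.1
      · obtain ⟨u', v', h1, h2, h3, h4⟩ := split_cons (fun z => -|z|) x u v hu hv
          (fun a ha b hb => neg_lt_neg (hd a ha b hb))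
          (fun y hy h => hx y (by simp [hy]) (neg_injective h))
          (fun a b c d hs h => hg.2.2 a b c d hs
            ⟨neg_lt_neg_iff.1 h.2.2, neg_lt_neg_iff.1 h.2.1, neg_lt_neg_iff.1 h.1⟩)
        refine ⟨u', v', h1, h2, h3, ?_⟩
        simp only [neg_lt_neg_iff] at h4
        exact h4.symm

/-! ### From a splitting to a sum decomposition -/

/-- If all values of `A` lie below those of `B`, the two parts carry consecutive intervals of values,
because sorting each part and concatenating gives the sorted list of all values. -/
lemma perm_split {A B : List ℕ} (h : (A ++ B).Perm (List.range' 1 (A.length + B.length)))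
    (hlt : ∀ a ∈ A, ∀ b ∈ B, a < b) :
    A.Perm (List.range' 1 A.length) ∧ B.Perm (List.range' (1 + A.length) B.length) := by
  have hA := List.perm_insertionSort (· ≤ ·) A
  have hB := List.perm_insertionSort (· ≤ ·) B
  have heq : A.insertionSort (· ≤ ·) ++ B.insertionSort (· ≤ ·)
      = List.range' 1 A.length ++ List.range' (1 + A.length) B.length := by
    rw [List.range'_append_1]
    refine List.Perm.eq_of_pairwise' (r := (· ≤ ·)) ?_ ?_ ((hA.append hB).trans h)
    · refine List.pairwise_append.2 ⟨List.pairwise_insertionSort _ _,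
        List.pairwise_insertionSort _ _, fun a ha b hb => ?_⟩
      exact (hlt a (hA.mem_iff.1 ha) b (hB.mem_iff.1 hb)).le
    · exact List.pairwise_le_range'
  obtain ⟨h1, h2⟩ := List.append_inj heq (by simp)
  exact ⟨h1 ▸ hA.symm, h2 ▸ hB.symm⟩

lemma unshift_spec {x : ℤ} {p : ℕ} (hx : p < x.natAbs) :
    (x - x.sign * (p : ℤ)).sign = x.sign ∧ (x - x.sign * (p : ℤ)).natAbs = x.natAbs - p := by
  rcases lt_trichotomy x 0 with h | h | h
  · rw [Int.sign_eq_neg_one_of_neg h]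
    exact ⟨Int.sign_eq_neg_one_of_neg (by omega), by omega⟩
  · subst h; simp at hx
  · rw [Int.sign_eq_one_of_pos h]
    exact ⟨Int.sign_eq_one_of_pos (by omega), by omega⟩

/-- The upper part of a splitting is the shift of a separable signed permutation. -/
lemma exists_unshift {v : List ℤ} {p : ℕ} (hg : Good v)
    (hv : (v.map Int.natAbs).Perm (List.range' (1 + p) v.length)) :
    ∃ v₀, v = v₀.map (fun x => x + x.sign * (p : ℤ)) ∧ v₀.length = v.length ∧
      IsSignedPerm v₀ ∧ Good v₀ ∧ ∀ x ∈ v₀, ∃ y ∈ v, x.sign = y.sign := by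
  have hp : ∀ x ∈ v, p < x.natAbs := by
    intro x hx
    have := hv.mem_iff.1 (List.mem_map_of_mem hx)
    rw [List.mem_range'_1] at this
    omega
  refine ⟨v.map (fun x => x - x.sign * (p : ℤ)), ?_, by simp, ?_, ?_, ?_⟩
  · rw [List.map_map]
    conv_lhs => rw [← List.map_id v]
    refine List.map_congr_left fun x hx => ?_
    simp only [Function.comp, id]
    rw [(unshift_spec (hp x hx)).1]
    ring
  · unfold IsSignedPerm
    have h1 : (v.map (fun x => x - x.sign * (p : ℤ))).map Int.natAbs
        = (v.map Int.natAbs).map (fun x => x - p) := by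
      rw [List.map_map, List.map_map]
      refine List.map_congr_left fun x hx => ?_
      exact (unshift_spec (hp x hx)).2
    have h2 : List.range' 1 v.length
        = (List.range' (1 + p) v.length).map (fun x => x - p) := by
      rw [List.map_sub_range' (by omega), Nat.add_sub_cancel]
    rw [h1, List.length_map, h2]
    exact hv.map _
  · refine hg.map _ (fun x hx => (unshift_spec (hp x hx)).1) (fun x hx y hy hlt => ?_)
    have h1 := (unshift_spec (hp x hx)).2
    have h2 := (unshift_spec (hp y hy)).2
    have h3 := hp x hx
    have h4 := hp y hy
    rw [Int.abs_eq_natAbs, Int.abs_eq_natAbs] at hlt ⊢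
    omega
  · intro x hx
    obtain ⟨y, hy, rfl⟩ := List.mem_map.1 hx
    exact ⟨y, hy, (unshift_spec (hp y hy)).1⟩

theorem inC_of_good (n : ℕ) : ∀ w : List ℤ, w.length = n → 1 ≤ n → IsSignedPerm w → Good w →
    InC w := by
  induction n using Nat.strong_induction_on with
  | _ n ih =>
    intro w hw hn hp hg
    by_cases hn1 : n = 1
    · subst hn1
      obtain ⟨x, rfl⟩ := List.length_eq_one_iff.1 hw
      have hx : x.natAbs = 1 := by simpa [IsSignedPerm] using hp
      rcases Int.natAbs_eq_iff.1 hx with h | h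
      · rw [h]; exact .one
      · rw [h]; exact .negone
    have hnd : (w.map (fun x : ℤ => |x|)).Nodup := by
      have h1 : (w.map Int.natAbs).Nodup := hp.nodup_iff.2 List.nodup_range'
      have h2 := h1.map (Nat.cast_injective (R := ℤ))
      simpa [List.map_map, Function.comp_def] using h2
    obtain ⟨u, v, hu, hv, rfl, hd⟩ := exists_split w (by omega) hnd hg
    have hul := List.length_pos_iff.2 hu
    have hvl := List.length_pos_iff.2 hv
    rw [List.length_append] at hw
    have gu := hg.sublist (List.sublist_append_left u v)
    have gv := hg.sublist (List.sublist_append_right u v)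
    have hp' : (u.map Int.natAbs ++ v.map Int.natAbs).Perm
        (List.range' 1 (u.length + v.length)) := by
      simpa [IsSignedPerm] using hp
    rcases hd with hd | hd
    · obtain ⟨pu, pv⟩ := perm_split (A := u.map Int.natAbs) (B := v.map Int.natAbs)
        (by simpa using hp') (by
          intro a ha b hb
          obtain ⟨x, hx, rfl⟩ := List.mem_map.1 ha
          obtain ⟨y, hy, rfl⟩ := List.mem_map.1 hb
          have := hd x hx y hy
          rw [Int.abs_eq_natAbs, Int.abs_eq_natAbs] at this
          omega)
      simp only [List.length_map] at pu pv
      obtain ⟨v₀, hve, hvl₀, pv₀, gv₀, -⟩ := exists_unshift gv pv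
      have := InC.dsum u v₀ (ih _ (by omega) u rfl hul pu gu)
        (ih _ (by omega) v₀ rfl (by omega) pv₀ gv₀)
      rwa [oplus, ← hve] at this
    · obtain ⟨pv, pu⟩ := perm_split (A := v.map Int.natAbs) (B := u.map Int.natAbs)
        (by simpa [add_comm] using List.perm_append_comm.trans hp') (by
          intro a ha b hb
          obtain ⟨x, hx, rfl⟩ := List.mem_map.1 ha
          obtain ⟨y, hy, rfl⟩ := List.mem_map.1 hb
          have := hd y hy x hx
          rw [Int.abs_eq_natAbs, Int.abs_eq_natAbs] at this
          omega)
      simp only [List.length_map] at pu pv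
      obtain ⟨u₀, hue, hul₀, pu₀, gu₀, hus⟩ := exists_unshift gu pu
      have hsign : ∀ a ∈ u, ∀ b ∈ v, a.sign = b.sign := fun a ha b hb =>
        hg.1 a b (List.Sublist.append (List.singleton_sublist.2 ha) (List.singleton_sublist.2 hb))
          (hd a ha b hb)
      -- Every entry of one part is inverted with every entry of the other, so all signs agree.
      have hall : AllSameSign (u₀ ++ v) := by
        obtain ⟨a, ha⟩ := List.exists_mem_of_ne_nil u hu
        obtain ⟨b, hb⟩ := List.exists_mem_of_ne_nil v hv
        have hs : ∀ x ∈ u₀ ++ v, x.sign = a.sign := by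
          intro x hx
          rcases List.mem_append.1 hx with hx | hx
          · obtain ⟨y, hy, he⟩ := hus x hx
            rw [he, hsign y hy b hb, hsign a ha b hb]
          · exact (hsign a ha x hx).symm
        rcases sign_eq_or (hp.ne_zero (List.mem_append_left v ha)) with h | h
        · exact .inl fun x hx => Int.sign_eq_one_iff_pos.1 ((hs x hx).trans h)
        · exact .inr fun x hx => Int.sign_eq_neg_one_iff_neg.1 ((hs x hx).trans h)
      have := InC.ssum u₀ v (ih _ (by omega) u₀ rfl (by omega) pu₀ gu₀)
        (ih _ (by omega) v rfl hvl pv gv) hall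
      rwa [ominus, ← hue] at this

/-- A signed permutation `w ∈ B_n` (`n ≥ 1`) is separable iff it
belongs to the smallest class `InC` containing `1` and `-1` and closed under direct
sums and (defined) skew sums. -/
theorem sep_signed_iff_built_from_one_negone (n : ℕ) (hn : 1 ≤ n) (w : List ℤ)
    (hw : w.length = n) (hperm : IsSignedPerm w) :
    IsSepB w ↔ InC w := by
  rw [isSepB_iff_good hperm]
  exact ⟨inC_of_good n w hw hn hperm, fun h => h.isSignedPerm_good.2⟩

end

end SepPaperFormal
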